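/- Let ψ : S → R_{n+1} be the K-algebra homomorphism determined by ψ(x_i) = x_i for 1 ≤ i ≤ n+1, ψ(x_{v_j}) = x_{i_{j+2}} for 0 ≤ j ≤ k−2, ψ(x_{s_1}) = x_{i_{k−1}}, and ψ(x_{s_2}) = x_{i_1}. Then ψ(M_{Π,M} + ⟨𝒜⟩) = M; consequently ψ induces a K-algebra isomorphism S/(M_{Π,M} + ⟨𝒜⟩) ≅ R_{n+1}/M (equivalently, S/M_{Π,M} ⊗_S S/⟨𝒜⟩ ≅ R_{n+1}/M as R_{n+1}-modules). -/

import Mathlib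

noncomputable section

open MvPolynomial

/-- Variable type of `S = K[x_1,…,x_{n+1}, x_{v_0},…,x_{v_{k-2}}, x_{s_1}, x_{s_2}]`,
a polynomial ring in `n + k + 2` variables. -/
abbrev SVar (n k : ℕ) := Fin (n + 1) ⊕ (Fin (k - 1) ⊕ Fin 2)

/-- The variable `x_j` of `S` (`1 ≤ j ≤ n + 1`). -/
def xvS (n k : ℕ) (j : ℕ) : SVar n k :=
  Sum.inl ⟨(j - 1) % (n + 1), Nat.mod_lt _ (Nat.succ_pos n)⟩

/-- The variable `x_{v_j}` of `S` (`0 ≤ j ≤ k - 2`). -/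
def vvS (n k : ℕ) (j : ℕ) : SVar n k :=
  if h : j < k - 1 then Sum.inr (Sum.inl ⟨j, h⟩) else Sum.inl ⟨0, Nat.succ_pos n⟩

/-- The variable `x_{s_1}` of `S`. -/
def s1S (n k : ℕ) : SVar n k := Sum.inr (Sum.inr 0)

/-- The variable `x_{s_2}` of `S`. -/
def s2S (n k : ℕ) : SVar n k := Sum.inr (Sum.inr 1)

/-- `as` is a regular sequence on the module `R/N`:  each `as_j` is a nonzerodivisor on
`R/(N + (as_0, …, as_{j-1}))` and `R/(N + (as))` is nonzero. -/
def IsRegSeqOnQuot (R : Type*) [CommRing R] (as : List R) (N : Ideal R) : Prop :=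
  (∀ (j : ℕ) (hj : j < as.length) (f : R),
      as.get ⟨j, hj⟩ * f ∈ N ⊔ Ideal.span {a | a ∈ as.take j} →
      f ∈ N ⊔ Ideal.span {a | a ∈ as.take j}) ∧
  N ⊔ Ideal.span {a | a ∈ as} ≠ ⊤

/-- The index in `Fin (n+1)` of the paper's variable `x_m` of `R_{n+1}`, `1 ≤ m ≤ n + 1`. -/
def xIdx (n : ℕ) (m : ℕ) : Fin (n + 1) := ⟨(m - 1) % (n + 1), Nat.mod_lt _ (Nat.succ_pos n)⟩

/-- The Cohen–Macaulay initial monomial ideal `M ⊆ R_{n+1}` of `P_n` attached to the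
sequence `1 = i_0 < i_1 < ⋯ < i_k = n + 1` (Conca–Negri–Rossi): generated by the
main diagonals `x_v x_{r+1}` with `v + 1 ≤ i_j < r + 1` for some `j`, and the
anti-diagonals `x_{v+1} x_r` with `i_j < v + 1 < r + 1 ≤ i_{j+1}` for some `j`. -/
def CMinitIdeal (n k : ℕ) (K : Type*) [Field K] (i : ℕ → ℕ) :
    Ideal (MvPolynomial (Fin (n + 1)) K) :=
  Ideal.span { f |
    (∃ v r : ℕ, 1 ≤ v ∧ v < r ∧ r ≤ n ∧ (∃ j, j ≤ k ∧ v + 1 ≤ i j ∧ i j < r + 1) ∧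
      f = X (xIdx n v) * X (xIdx n (r + 1))) ∨
    (∃ v r : ℕ, 1 ≤ v ∧ v < r ∧ r ≤ n ∧ (∃ j, j < k ∧ i j < v + 1 ∧ r + 1 ≤ i (j + 1)) ∧
      f = X (xIdx n (v + 1)) * X (xIdx n r)) }

/-- The `K`-algebra homomorphism `ψ : S → R_{n+1}` with `ψ(x_m) = x_m`,
`ψ(x_{v_j}) = x_{i_{j+2}}`, `ψ(x_{s_1}) = x_{i_{k-1}}`, `ψ(x_{s_2}) = x_{i_1}`. -/
def psiMap (n k : ℕ) (K : Type*) [Field K] (i : ℕ → ℕ) :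
    MvPolynomial (SVar n k) K →ₐ[K] MvPolynomial (Fin (n + 1)) K :=
  aeval (Sum.elim (fun j : Fin (n + 1) => X j)
    (Sum.elim (fun j : Fin (k - 1) => X (xIdx n (i ((j : ℕ) + 2))))
      (fun t : Fin 2 => if t = 0 then X (xIdx n (i (k - 1))) else X (xIdx n (i 1)))))

theorem quot_equiv {K R S : Type*} [Field K] [CommRing R] [CommRing S] [Algebra K R] [Algebra K S]
    (f : R →ₐ[K] S) (hs : Function.Surjective f) (I : Ideal R) (J : Ideal S)
    (h1 : I ≤ J.comap f) (h2 : J.comap f ≤ I) :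
    ∃ e : (R ⧸ I) ≃ₐ[K] (S ⧸ J),
      ∀ x : R, e (Ideal.Quotient.mk _ x) = Ideal.Quotient.mk _ (f x) := by
  have hb : Function.Bijective (Ideal.quotientMapₐ J f h1) := by
    constructor
    · rw [injective_iff_map_eq_zero]
      intro x hx
      obtain ⟨x, rfl⟩ := Ideal.Quotient.mk_surjective x
      have hx' : Ideal.Quotient.mk J (f x) = 0 := hx
      rw [Ideal.Quotient.eq_zero_iff_mem] at hx' ⊢
      exact h2 hx'
    · intro y
      obtain ⟨y, rfl⟩ := Ideal.Quotient.mk_surjective y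
      obtain ⟨x, rfl⟩ := hs y
      exact ⟨Ideal.Quotient.mk I x, rfl⟩
  exact ⟨AlgEquiv.ofBijective _ hb, fun x => rfl⟩

theorem seq_mono (k : ℕ) (i : ℕ → ℕ) (h : ∀ r < k, i r < i (r + 1)) :
    ∀ b, b ≤ k → ∀ a, a ≤ b → i a ≤ i b := by
  intro b
  induction b with
  | zero => intro _ a ha; obtain rfl : a = 0 := by omega
            exact le_rfl
  | succ b ih =>
    intro hb a ha
    rcases Nat.lt_or_ge b a with h1 | h1
    · obtain rfl : a = b + 1 := by omega
      exact le_rfl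
    · exact (ih (by omega) a h1).trans (h b (by omega)).le

theorem exists_block (i : ℕ → ℕ) (m : ℕ) :
    ∀ k, i 0 ≤ m → m < i k → ∃ r, r < k ∧ i r ≤ m ∧ m < i (r + 1) := by
  intro k
  induction k with
  | zero => intro h0 h1; omega
  | succ k ih =>
    intro h0 h1
    rcases Nat.lt_or_ge m (i k) with h | h
    · obtain ⟨r, hr, h2⟩ := ih h0 h
      exact ⟨r, by omega, h2⟩
    · exact ⟨k, by omega, h, h1⟩

theorem psi_x (n k : ℕ) (K : Type*) [Field K] (i : ℕ → ℕ) (j : ℕ) :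
    psiMap n k K i (X (xvS n k j)) = X (xIdx n j) := by
  simp [psiMap, xvS, xIdx]

theorem psi_s1 (n k : ℕ) (K : Type*) [Field K] (i : ℕ → ℕ) :
    psiMap n k K i (X (s1S n k)) = X (xIdx n (i (k - 1))) := by
  simp [psiMap, s1S]

theorem psi_s2 (n k : ℕ) (K : Type*) [Field K] (i : ℕ → ℕ) :
    psiMap n k K i (X (s2S n k)) = X (xIdx n (i 1)) := by
  simp [psiMap, s2S]

theorem psi_v (n k : ℕ) (K : Type*) [Field K] (i : ℕ → ℕ) (j : ℕ) (hj : j < k - 1) :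
    psiMap n k K i (X (vvS n k j)) = X (xIdx n (i (j + 2))) := by
  simp [psiMap, vvS, hj]

/-- The section of `ψ`. -/
def secMap (n k : ℕ) (K : Type*) [Field K] :
    MvPolynomial (Fin (n + 1)) K →ₐ[K] MvPolynomial (SVar n k) K :=
  rename Sum.inl

theorem psi_sec (n k : ℕ) (K : Type*) [Field K] (i : ℕ → ℕ) (f : MvPolynomial (Fin (n + 1)) K) :
    psiMap n k K i (secMap n k K f) = f := by
  have : (psiMap n k K i).comp (secMap n k K) = AlgHom.id K _ := by
    ext j
    simp [psiMap, secMap]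
  exact DFunLike.congr_fun this f

theorem sub_sec_mem (n k : ℕ) (K : Type*) [Field K] (i : ℕ → ℕ)
    (J : Ideal (MvPolynomial (SVar n k) K))
    (hv : ∀ j < k - 1, X (vvS n k j) - X (xvS n k (i (j + 2))) ∈ J)
    (h1 : X (s1S n k) - X (xvS n k (i (k - 1))) ∈ J)
    (h2 : X (s2S n k) - X (xvS n k (i 1)) ∈ J) (f : MvPolynomial (SVar n k) K) :
    f - secMap n k K (psiMap n k K i f) ∈ J := by
  rw [← Ideal.Quotient.mk_eq_mk_iff_sub_mem]
  have : (Ideal.Quotient.mkₐ K J) =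
      ((Ideal.Quotient.mkₐ K J).comp (secMap n k K)).comp (psiMap n k K i) := by
    ext j
    simp only [AlgHom.comp_apply, Ideal.Quotient.mkₐ_eq_mk]
    rw [Ideal.Quotient.mk_eq_mk_iff_sub_mem]
    rcases j with j | j | j
    · simp [psiMap, secMap]
    · have := hv j j.2
      simpa [psiMap, secMap, vvS, xvS, xIdx] using this
    · fin_cases j
      · simpa [psiMap, secMap, s1S, xvS, xIdx] using h1
      · simpa [psiMap, secMap, s2S, xvS, xIdx] using h2
  exact DFunLike.congr_fun this f

/-- `ψ(M_{Π,M} + ⟨𝒜⟩) = M`, and `ψ` induces a `K`-algebra isomorphism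
`S/(M_{Π,M} + ⟨𝒜⟩) ≅ R_{n+1}/M`. -/
theorem statement_16 (K : Type*) [Field K] (n k : ℕ) (hn : 2 ≤ n) (hk : 2 ≤ k)
    (i : ℕ → ℕ) (hi0 : i 0 = 1) (hik : i k = n + 1) (himono : ∀ r < k, i r < i (r + 1))
    (A : Matrix (Fin 2) (Fin n) (MvPolynomial (SVar n k) K))
    (hA1 : ∀ r t : ℕ, r < k → t < i (r + 1) - i r → ∀ c : Fin n, (c : ℕ) = i r - 1 + t →
      A 1 c = if r = k - 1 ∧ t = i k - i (k - 1) - 1 then X (s1S n k)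
              else X (xvS n k (i (r + 1) - 1 - t)))
    (hA0 : ∀ r t : ℕ, r < k → t < i (r + 1) - i r → ∀ c : Fin n, (c : ℕ) = i r - 1 + t →
      A 0 c = if t = 0 then (if r = 0 then X (s2S n k) else X (vvS n k (r - 1)))
              else X (xvS n k (i (r + 1) - t)))
    (Mpark : Ideal (MvPolynomial (SVar n k) K))
    (hMpark : Mpark = Ideal.span { f | ∃ c₁ c₂ : Fin n, c₁ < c₂ ∧ f = A 1 c₁ * A 0 c₂ })
    (As : List (MvPolynomial (SVar n k) K))
    (hAs : As = ((List.range (k - 1)).map fun j => X (vvS n k j) - X (xvS n k (i (j + 2))))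
      ++ [X (s1S n k) - X (xvS n k (i (k - 1))), X (s2S n k) - X (xvS n k (i 1))]) :
    Ideal.map (psiMap n k K i) (Mpark ⊔ Ideal.span {a | a ∈ As}) = CMinitIdeal n k K i ∧
    ∃ e : (MvPolynomial (SVar n k) K ⧸ (Mpark ⊔ Ideal.span {a | a ∈ As})) ≃ₐ[K]
          (MvPolynomial (Fin (n + 1)) K ⧸ CMinitIdeal n k K i),
      ∀ f : MvPolynomial (SVar n k) K,
        e (Ideal.Quotient.mk _ f) = Ideal.Quotient.mk _ (psiMap n k K i f) := by
  have hmono := seq_mono k i himono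
  have e1 : ∀ r t : ℕ, r < k → t < i (r + 1) - i r → ∀ c : Fin n, (c : ℕ) = i r - 1 + t →
      psiMap n k K i (A 1 c) = X (xIdx n (i (r + 1) - 1 - t)) := by
    intro r t hr ht c hc
    rw [hA1 r t hr ht c hc]
    split_ifs with h
    · obtain ⟨rfl, rfl⟩ := h
      rw [psi_s1]
      have hk1 : k - 1 + 1 = k := by omega
      rw [hk1] at ht ⊢
      congr 2
      omega
    · rw [psi_x]
  have e0 : ∀ r t : ℕ, r < k → t < i (r + 1) - i r → ∀ c : Fin n, (c : ℕ) = i r - 1 + t →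
      psiMap n k K i (A 0 c) = X (xIdx n (i (r + 1) - t)) := by
    intro r t hr ht c hc
    rw [hA0 r t hr ht c hc]
    split_ifs with h h'
    · subst h h'
      rw [psi_s2]; rfl
    · subst h
      rw [psi_v _ _ _ _ _ (by omega)]
      have : r - 1 + 2 = r + 1 := by omega
      rw [this]; rfl
    · rw [psi_x]
  have hpos : ∀ r ≤ k, 1 ≤ i r := fun r hr => hi0 ▸ hmono r hr 0 (Nat.zero_le _)
  -- every column, and every index, lies in a block
  have hcol : ∀ c : Fin n, ∃ r t : ℕ, r < k ∧ t < i (r + 1) - i r ∧ (c : ℕ) = i r - 1 + t := by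
    intro c
    obtain ⟨r, hr, h1, h2⟩ := exists_block i (c + 1) k (by omega) (by omega)
    have := hpos r hr.le
    exact ⟨r, c + 1 - i r, hr, by omega, by omega⟩
  have hmap : Ideal.map (psiMap n k K i) (Mpark ⊔ Ideal.span {a | a ∈ As})
      = CMinitIdeal n k K i := by
    rw [Ideal.map_sup]
    apply le_antisymm
    · apply sup_le
      · rw [hMpark, Ideal.map_span, Ideal.span_le]
        rintro _ ⟨_, ⟨c₁, c₂, hc, rfl⟩, rfl⟩
        obtain ⟨r₁, t₁, hr₁, ht₁, hc₁⟩ := hcol c₁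
        obtain ⟨r₂, t₂, hr₂, ht₂, hc₂⟩ := hcol c₂
        have hc' : (c₁ : ℕ) < c₂ := hc
        have p1 := hpos r₁ hr₁.le
        have p2 := hpos r₂ hr₂.le
        have u1 := hmono k le_rfl (r₁ + 1) hr₁
        have u2 := hmono k le_rfl (r₂ + 1) hr₂
        apply Ideal.subset_span
        have hval : psiMap n k K i (A 1 c₁ * A 0 c₂) =
            X (xIdx n (i (r₁ + 1) - 1 - t₁)) * X (xIdx n (i (r₂ + 1) - t₂)) := by
          rw [map_mul, e1 r₁ t₁ hr₁ ht₁ c₁ hc₁, e0 r₂ t₂ hr₂ ht₂ c₂ hc₂]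
        rcases lt_trichotomy r₁ r₂ with h | h | h
        · left
          have := hmono r₂ hr₂.le (r₁ + 1) h
          refine ⟨i (r₁ + 1) - 1 - t₁, i (r₂ + 1) - 1 - t₂, by omega, by omega, by omega,
            ⟨r₁ + 1, hr₁, by omega, by omega⟩, ?_⟩
          refine hval.trans ?_
          congr 3
          omega
        · right
          subst h
          refine ⟨i (r₁ + 1) - 1 - t₂, i (r₁ + 1) - 1 - t₁, by omega, by omega, by omega,
            ⟨r₁, hr₁, by omega, by omega⟩, ?_⟩
          refine hval.trans ?_
          rw [mul_comm]
          congr 3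
          omega
        · exfalso
          have := hmono r₁ hr₁.le (r₂ + 1) h
          omega
      · rw [Ideal.map_span, Ideal.span_le]
        rintro _ ⟨a, ha, rfl⟩
        have : psiMap n k K i a = 0 := by
          simp only [hAs, Set.mem_ofPred_eq, List.mem_append, List.mem_map, List.mem_range,
            List.mem_cons, List.not_mem_nil, or_false] at ha
          rcases ha with ⟨j, hj, rfl⟩ | rfl | rfl
          · rw [map_sub, psi_v _ _ _ _ _ hj, psi_x, sub_self]
          · rw [map_sub, psi_s1, psi_x, sub_self]
          · rw [map_sub, psi_s2, psi_x, sub_self]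
        change psiMap n k K i a ∈ CMinitIdeal n k K i
        rw [this]
        exact zero_mem _
    · refine le_trans ?_ le_sup_left
      have key : ∀ c₁ c₂ : Fin n, c₁ < c₂ →
          psiMap n k K i (A 1 c₁) * psiMap n k K i (A 0 c₂) ∈
            Ideal.map (psiMap n k K i) Mpark := by
        intro c₁ c₂ hc
        rw [← map_mul]
        apply Ideal.mem_map_of_mem
        rw [hMpark]
        exact Ideal.subset_span ⟨c₁, c₂, hc, rfl⟩
      rw [CMinitIdeal, Ideal.span_le]
      rintro f (⟨v, r, hv, hvr, hr, ⟨j, hj, hj1, hj2⟩, rfl⟩ |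
        ⟨v, r, hv, hvr, hr, ⟨j, hj, hj1, hj2⟩, rfl⟩)
      · obtain ⟨a, ha, ha1, ha2⟩ := exists_block i v k (by omega) (by omega)
        obtain ⟨b, hb, hb1, hb2⟩ := exists_block i r k (by omega) (by omega)
        have pa := hpos a ha.le
        have pb := hpos b hb.le
        have hab : a < b := by
          by_contra hcon
          have hja : a < j := by
            by_contra h'
            have := hmono a ha.le j (by omega)
            omega
          have := hmono j hj (b + 1) (by omega)
          omega
        have hm := hmono b hb.le (a + 1) hab
        have u2 := hmono k le_rfl (b + 1) hb
        have := key ⟨i a - 1 + (i (a + 1) - 1 - v), by omega⟩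
          ⟨i b - 1 + (i (b + 1) - 1 - r), by omega⟩ (by rw [Fin.mk_lt_mk]; omega)
        rw [e1 a (i (a + 1) - 1 - v) ha (by omega) _ rfl,
          e0 b (i (b + 1) - 1 - r) hb (by omega) _ rfl] at this
        have q1 : i (a + 1) - 1 - (i (a + 1) - 1 - v) = v := by omega
        have q2 : i (b + 1) - (i (b + 1) - 1 - r) = r + 1 := by omega
        rw [q1, q2] at this
        exact this
      · have pj := hpos j hj.le
        have u2 := hmono k le_rfl (j + 1) hj
        have := key ⟨i j - 1 + (i (j + 1) - 1 - r), by omega⟩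
          ⟨i j - 1 + (i (j + 1) - 1 - v), by omega⟩ (by rw [Fin.mk_lt_mk]; omega)
        rw [e1 j (i (j + 1) - 1 - r) hj (by omega) _ rfl,
          e0 j (i (j + 1) - 1 - v) hj (by omega) _ rfl] at this
        have q1 : i (j + 1) - 1 - (i (j + 1) - 1 - r) = r := by omega
        have q2 : i (j + 1) - (i (j + 1) - 1 - v) = v + 1 := by omega
        rw [q1, q2, mul_comm] at this
        exact this
  refine ⟨hmap, ?_⟩
  set I := Mpark ⊔ Ideal.span {a | a ∈ As} with hI
  have hsurj : Function.Surjective (psiMap n k K i) := fun f => ⟨_, psi_sec n k K i f⟩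
  have hAI : ∀ a ∈ As, a ∈ I := fun a ha =>
    (le_sup_right : _ ≤ Mpark ⊔ Ideal.span {a | a ∈ As}) (Ideal.subset_span ha)
  have hsub : ∀ f, f - secMap n k K (psiMap n k K i f) ∈ I := by
    apply sub_sec_mem n k K i I
    · intro j hj
      apply hAI
      rw [hAs]
      exact List.mem_append_left _ (List.mem_map.2 ⟨j, List.mem_range.2 hj, rfl⟩)
    · apply hAI
      rw [hAs]
      simp
    · apply hAI
      rw [hAs]
      simp
  have hle : I ≤ (CMinitIdeal n k K i).comap (psiMap n k K i) := by
    rw [← hmap]; exact Ideal.le_comap_map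
  have hge : (CMinitIdeal n k K i).comap (psiMap n k K i) ≤ I := by
    intro f hf
    rw [Ideal.mem_comap, ← hmap] at hf
    obtain ⟨g, hg, hgf⟩ := (Ideal.mem_map_iff_of_surjective (psiMap n k K i) hsurj).1 hf
    have h1 := hsub f
    have h2 := hsub g
    rw [hgf] at h2
    have h3 := I.add_mem (I.sub_mem h1 h2) hg
    have h4 : f - secMap n k K (psiMap n k K i f) - (g - secMap n k K (psiMap n k K i f)) + g
        = f := by ring
    rwa [h4] at h3
  exact quot_equiv (psiMap n k K i) hsurj I _ hle hge
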